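/- Let p ∈ [0, 2α). For every ε with 0 < ε ≤ (2α − p)/2 there exists N_ε such that for all N > N_ε and all n ≥ 0, almost surely E[ (θ_{n+1} − θ_n)^p | F_{n−m_N} ] ≤ (1 + 4p/(2α − p)) · (δ_N / log₂ N)^{p/(2α + ε)}. -/

import Mathlib

open MeasureTheory ProbabilityTheory Real Filter Set

noncomputable section

/-- One step of the `N`-BRW: each of the `N` particles branches into two, the children jump
according to `jump`, and only the `N` right-most particles are kept; the result is the
sorted (ascending) vector of the `N` retained positions. -/
def brwStep (N : ℕ) (pos : Fin N → ℝ) (jump : Fin N → Fin 2 → ℝ) : Fin N → ℝ := fun i =>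
  (((Finset.univ : Finset (Fin N × Fin 2)).val.map fun p => pos p.1 + jump p.1 p.2).sort
      (· ≤ ·)).getD (N + i) 0

/-- The `N`-BRW started from the sorted configuration `x0`, driven by the jumps `jump`:
`brw N x0 jump n i` is the position `X_{i+1}(n)` of the `(i+1)`-th lowest particle at time `n`. -/
def brw (N : ℕ) (x0 : Fin N → ℝ) (jump : ℕ → Fin N → Fin 2 → ℝ) : ℕ → Fin N → ℝ
  | 0 => x0
  | n + 1 => brwStep N (brw N x0 jump n) (jump n)

/-- Position `X_N(n)` of the right-most particle of the `N`-BRW started at the origin. -/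
def brwMax (N : ℕ) (jump : ℕ → Fin N → Fin 2 → ℝ) (n : ℕ) : ℝ :=
  ⨆ i, brw N (fun _ => 0) jump n i

/-- Position `X_1(n)` of the left-most particle of the `N`-BRW started at the origin. -/
def brwMin (N : ℕ) (jump : ℕ → Fin N → Fin 2 → ℝ) (n : ℕ) : ℝ :=
  ⨅ i, brw N (fun _ => 0) jump n i

/-- The `(N,ℓ)`-discretised stairs process driven by the jumps `Y`
(with the convention `R(k) = 0` for `k ≤ 0`, realised via truncated subtraction). -/
def dsp (N ℓ : ℕ) (Y : ℕ → Fin N → Fin 2 → ℝ) : ℕ → ℝ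
  | 0 => 0
  | n + 1 => max (dsp N ℓ Y n) (dsp N ℓ Y (n - ℓ) + ⨆ p : Fin N × Fin 2, Y n p.1 p.2)

/-- The tail `P(X > x) = 1/h(x)` of the random variable `X` under `P`. -/
def tail {Ω : Type*} [MeasurableSpace Ω] (P : Measure Ω) (X : Ω → ℝ) (x : ℝ) : ℝ :=
  (P {ω | x < X ω}).toReal

/-- Generalized inverse `h⁻¹(y)` of `h(x) = 1 / P(X > x)`. -/
def hinv {Ω : Type*} [MeasurableSpace Ω] (P : Measure Ω) (X : Ω → ℝ) (y : ℝ) : ℝ :=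
  sInf {x : ℝ | 0 ≤ x ∧ tail P X x ≤ y⁻¹}

/-- The scaling sequence `c_N = h⁻¹(2 N log₂ N)`. -/
def cN {Ω : Type*} [MeasurableSpace Ω] (P : Measure Ω) (X : Ω → ℝ) (N : ℕ) : ℝ :=
  hinv P X (2 * N * Real.logb 2 N)

/-- The σ-algebra `F_n` generated by the jump variables `ξ k i j`, `0 ≤ k ≤ n-1`
(the trivial σ-algebra for `n = 0`). -/
def brwFilt {Ω : Type*} [MeasurableSpace Ω] (N : ℕ) (ξ : ℕ → Fin N → Fin 2 → Ω → ℝ) (n : ℕ) :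
    MeasurableSpace Ω :=
  ⨆ (k : ℕ) (_ : k < n) (i : Fin N) (j : Fin 2), MeasurableSpace.comap (ξ k i j) inferInstance

/-- `θ^{(m)}_n = max_{0 ≤ k ≤ n} (𝒴_N(k) − R^{N,m}(k))`. -/
def theta (N m : ℕ) (Y : ℕ → Fin N → Fin 2 → ℝ) (n : ℕ) : ℝ :=
  (Finset.range (n + 1)).sup' Finset.nonempty_range_add_one fun k => brwMax N Y k - dsp N m Y k

/-!
The right-most particle at time `n + 1` descends from a particle which, at time `n`, jumps. The
stairs process follows every jump performed from the level of time `n - m`, and `θ_n` already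
accounts for every particle present at time `n`, so `θ` can only grow by the minimum of the last
jump and the displacement of the particle since time `n - m`. This minimum depends on the jumps from
time `n - m` on, hence is independent of `F_{n-m}`, and an unconditional moment bound suffices.

Its two ingredients are independent, so it exceeds `x` with probability at most `2 P(Y > x)` times
the expected number of particles displaced by more than `x`. Without selection there are
`N * 2 ^ m` of them, each performing an `m`-step random walk, and a heavy-tailed walk is large
because of one big jump. As `2 ^ m = N δ_N` and `P(Y > 1) ≤ 1 / (2 N log₂ N)`, the product is about
`x ^ (-2α) * δ_N / log₂ N`. Potter's bounds turn this into `(r / x) ^ q` for every `q < 2α` and all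
`x ≥ r`, where `r = (δ_N / log₂ N) ^ (1 / (2α + ε))`: the spare `ε` absorbs all logarithms and
powers of `δ_N`. Integrating the tail, with `q - p = (2α - p) / 4`, gives the constant
`1 + p / (q - p)`.
-/

section Selection

theorem lt_getElem_iff_le_countP {R : Type*} [LinearOrder R] {L : List R}
    (hL : L.Pairwise (· ≤ ·)) {k : ℕ} (hk : k < L.length) (x : R) :
    x < L[k] ↔ L.length - k ≤ L.countP (x < ·) := by
  have hsplit : L = L.take k ++ L[k] :: L.drop (k + 1) := by
    rw [← List.drop_eq_getElem_cons hk, List.take_append_drop]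
  have hcount : L.countP (x < ·) = (L.take k).countP (x < ·) +
      ((L.drop (k + 1)).countP (x < ·) + if x < L[k] then 1 else 0) := by
    conv_lhs => rw [hsplit, List.countP_append, List.countP_cons]
    simp only [decide_eq_true_eq]
  rw [hsplit, List.pairwise_append, List.pairwise_cons] at hL
  obtain ⟨-, ⟨hdrop, -⟩, htake⟩ := hL
  constructor
  · intro hx
    have hall : (L.drop (k + 1)).countP (x < ·) = (L.drop (k + 1)).length :=
      List.countP_eq_length.2 fun y hy => decide_eq_true (hx.trans_le (hdrop y hy))
    rw [hcount, hall, List.length_drop, if_pos hx]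
    omega
  · intro hle
    by_contra hx
    have hnone : (L.take k).countP (x < ·) = 0 :=
      List.countP_eq_zero.2 fun y hy hxy =>
        hx ((of_decide_eq_true hxy).trans_le (htake y hy _ List.mem_cons_self))
    have hrest : (L.drop (k + 1)).countP (x < ·) ≤ (L.drop (k + 1)).length := List.countP_le_length
    rw [hcount, hnone, if_neg hx] at hle
    rw [List.length_drop] at hrest
    omega

/-- The positions of the `2N` children of a generation, sorted in ascending order; `brwStep`
retains the upper half of this list. -/
def sortedOffspring {N : ℕ} (pos : Fin N → ℝ) (jump : Fin N → Fin 2 → ℝ) : List ℝ :=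
  ((Finset.univ : Finset (Fin N × Fin 2)).val.map fun p => pos p.1 + jump p.1 p.2).sort (· ≤ ·)

variable {N : ℕ} (pos : Fin N → ℝ) (jump : Fin N → Fin 2 → ℝ)

theorem coe_sortedOffspring : (sortedOffspring pos jump : Multiset ℝ) =
    (Finset.univ : Finset (Fin N × Fin 2)).val.map fun p => pos p.1 + jump p.1 p.2 :=
  Multiset.sort_eq _ _

theorem length_sortedOffspring : (sortedOffspring pos jump).length = N + N := by
  rw [← Multiset.coe_card, coe_sortedOffspring, Multiset.card_map, Finset.card_val,
    Finset.card_univ, Fintype.card_prod, Fintype.card_fin, Fintype.card_fin, mul_two]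

theorem pairwise_sortedOffspring : (sortedOffspring pos jump).Pairwise (· ≤ ·) :=
  Multiset.pairwise_sort _ _

theorem brwStep_eq_getElem (i : Fin N) :
    brwStep N pos jump i = (sortedOffspring pos jump)[N + i]'(by
      rw [length_sortedOffspring]; omega) :=
  List.getD_eq_getElem _ _ _

theorem lt_brwStep_iff (i : Fin N) (x : ℝ) :
    x < brwStep N pos jump i ↔
      N - i ≤ (Finset.univ.filter fun p : Fin N × Fin 2 => x < pos p.1 + jump p.1 p.2).card := by
  rw [brwStep_eq_getElem, lt_getElem_iff_le_countP (pairwise_sortedOffspring pos jump),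
    length_sortedOffspring, ← Multiset.coe_countP, coe_sortedOffspring, Multiset.countP_map,
    Nat.add_sub_add_left]
  rfl

theorem exists_brwStep_eq (i : Fin N) :
    ∃ p : Fin N × Fin 2, brwStep N pos jump i = pos p.1 + jump p.1 p.2 := by
  have hmem : brwStep N pos jump i ∈ (sortedOffspring pos jump : Multiset ℝ) := by
    rw [brwStep_eq_getElem]
    exact List.getElem_mem _
  rw [coe_sortedOffspring, Multiset.mem_map] at hmem
  obtain ⟨p, -, hp⟩ := hmem
  exact ⟨p, hp.symm⟩

theorem brwStep_le_add {pos pos' : Fin N → ℝ} {c : ℝ} (h : ∀ i, pos i ≤ c + pos' i) (i : Fin N) :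
    brwStep N pos jump i ≤ c + brwStep N pos' jump i := by
  refine sub_le_iff_le_add'.1 (le_of_forall_lt fun x hx => ?_)
  rw [lt_sub_iff_add_lt, lt_brwStep_iff] at hx
  refine (lt_brwStep_iff ..).2 (hx.trans (Finset.card_le_card fun p => ?_))
  simp only [Finset.mem_filter_univ]
  intro hp
  linarith [h p.1]

theorem sum_brwStep_le {M : Type*} [AddCommMonoid M] [PartialOrder M] [CanonicallyOrderedAdd M]
    [IsOrderedAddMonoid M] (f : ℝ → M) :
    ∑ i, f (brwStep N pos jump i) ≤ ∑ p : Fin N × Fin 2, f (pos p.1 + jump p.1 p.2) := by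
  set L := sortedOffspring pos jump
  have hlen : L.length = N + N := length_sortedOffspring pos jump
  have hsum : ∑ p : Fin N × Fin 2, f (pos p.1 + jump p.1 p.2) = ∑ j : Fin (N + N), f L[j] := by
    calc ∑ p : Fin N × Fin 2, f (pos p.1 + jump p.1 p.2) = (Multiset.map f L).sum := by
          rw [coe_sortedOffspring, Multiset.map_map]; rfl
      _ = ∑ j : Fin L.length, f L[j] := by
          rw [Multiset.map_coe, Multiset.sum_coe, ← Fin.sum_univ_fun_getElem]; rfl
      _ = ∑ j : Fin (N + N), f L[j] :=
          Fintype.sum_equiv (finCongr hlen) _ _ fun _ => rfl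
  rw [hsum, Fin.sum_univ_add]
  simp only [brwStep_eq_getElem]
  exact le_add_self

theorem measurable_brwStep {Ω : Type*} {mΩ : MeasurableSpace Ω} {pos : Ω → Fin N → ℝ}
    {jump : Ω → Fin N → Fin 2 → ℝ} (hpos : ∀ i, Measurable fun ω => pos ω i)
    (hjump : ∀ i j, Measurable fun ω => jump ω i j) (i : Fin N) :
    Measurable fun ω => brwStep N (pos ω) (jump ω) i := by
  refine measurable_of_Ioi fun x => ?_
  simp only [preimage, mem_Ioi, lt_brwStep_iff, Finset.card_filter]
  refine measurableSet_le measurable_const (Finset.measurable_fun_sum _ fun p _ => ?_)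
  exact Measurable.ite (measurableSet_lt measurable_const ((hpos _).add (hjump _ _)))
    measurable_const measurable_const

end Selection

section Genealogy

variable {N : ℕ} {Y : ℕ → Fin N → Fin 2 → ℝ}

theorem brw_nonneg (hY : ∀ k i j, 0 ≤ Y k i j) (k : ℕ) (i : Fin N) :
    0 ≤ brw N (fun _ => 0) Y k i := by
  induction k generalizing i with
  | zero => exact le_rfl
  | succ k ih =>
    obtain ⟨p, hp⟩ := exists_brwStep_eq (brw N (fun _ => 0) Y k) (Y k) i
    rw [brw, hp]
    exact add_nonneg (ih _) (hY _ _ _)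

theorem brw_le_brwMax (Y : ℕ → Fin N → Fin 2 → ℝ) (k : ℕ) (i : Fin N) :
    brw N (fun _ => 0) Y k i ≤ brwMax N Y k :=
  le_ciSup (f := fun i => brw N (fun _ => 0) Y k i) (finite_range _).bddAbove i

theorem brw_add_le (Y : ℕ → Fin N → Fin 2 → ℝ) (a k : ℕ) (i : Fin N) :
    brw N (fun _ => 0) Y (a + k) i ≤
      brwMax N Y a + brw N (fun _ => 0) (fun l => Y (a + l)) k i := by
  induction k generalizing i with
  | zero => exact (brw_le_brwMax Y a i).trans_eq (add_zero _).symm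
  | succ k ih => exact brwStep_le_add _ ih i

theorem measurable_brw {Ω : Type*} {mΩ : MeasurableSpace Ω} {Y : ℕ → Fin N → Fin 2 → Ω → ℝ} {k : ℕ}
    (hY : ∀ l < k, ∀ i j, Measurable (Y l i j)) (i : Fin N) :
    Measurable fun ω => brw N (fun _ => 0) (fun l i j => Y l i j ω) k i := by
  induction k generalizing i with
  | zero => exact measurable_const
  | succ k ih =>
    exact measurable_brwStep (fun i => ih (fun l hl => hY l (hl.trans k.lt_succ_self)) i)
      (hY k k.lt_succ_self) i

theorem measurable_brwMax {Ω : Type*} [MeasurableSpace Ω] {Y : ℕ → Fin N → Fin 2 → Ω → ℝ}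
    (hY : ∀ l i j, Measurable (Y l i j)) (k : ℕ) :
    Measurable fun ω => brwMax N (fun l i j => Y l i j ω) k :=
  Measurable.iSup fun i => measurable_brw (fun l _ => hY l) i

theorem dsp_le_dsp_succ (m : ℕ) (Y : ℕ → Fin N → Fin 2 → ℝ) (n : ℕ) :
    dsp N m Y n ≤ dsp N m Y (n + 1) := by
  rw [dsp]
  exact le_max_left _ _

theorem dsp_add_le_dsp_succ (m : ℕ) (Y : ℕ → Fin N → Fin 2 → ℝ) (n : ℕ) (p : Fin N × Fin 2) :
    dsp N m Y (n - m) + Y n p.1 p.2 ≤ dsp N m Y (n + 1) := by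
  have hp : Y n p.1 p.2 ≤ ⨆ p : Fin N × Fin 2, Y n p.1 p.2 :=
    le_ciSup (f := fun p : Fin N × Fin 2 => Y n p.1 p.2) (finite_range _).bddAbove p
  rw [dsp]
  exact (add_le_add_right hp _).trans (le_max_right _ _)

theorem measurable_dsp {Ω : Type*} {mΩ : MeasurableSpace Ω} {Y : ℕ → Fin N → Fin 2 → Ω → ℝ}
    (hY : ∀ l i j, Measurable (Y l i j)) (m n : ℕ) :
    Measurable fun ω => dsp N m (fun l i j => Y l i j ω) n := by
  induction n using Nat.strong_induction_on with
  | _ n ih =>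
    cases n with
    | zero => simp only [dsp]; exact measurable_const
    | succ n =>
      simp only [dsp]
      exact (ih n (by omega)).max
        ((ih (n - m) (by omega)).add (Measurable.iSup fun p => hY n p.1 p.2))

theorem theta_succ (m : ℕ) (Y : ℕ → Fin N → Fin 2 → ℝ) (n : ℕ) :
    theta N m Y (n + 1) = max (theta N m Y n) (brwMax N Y (n + 1) - dsp N m Y (n + 1)) := by
  simp only [theta, Finset.range_add_one (n := n + 1)]
  rw [Finset.sup'_insert, max_comm]

theorem sub_le_theta (m : ℕ) (Y : ℕ → Fin N → Fin 2 → ℝ) {k n : ℕ} (hk : k ≤ n) :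
    brwMax N Y k - dsp N m Y k ≤ theta N m Y n :=
  Finset.le_sup' (fun k => brwMax N Y k - dsp N m Y k)
    (Finset.mem_range.2 (Nat.lt_succ_of_le hk))

theorem theta_le_theta_succ (m : ℕ) (Y : ℕ → Fin N → Fin 2 → ℝ) (n : ℕ) :
    theta N m Y n ≤ theta N m Y (n + 1) := by
  rw [theta_succ]
  exact le_max_left _ _

theorem measurable_theta {Ω : Type*} {mΩ : MeasurableSpace Ω} {Y : ℕ → Fin N → Fin 2 → Ω → ℝ}
    (hY : ∀ l i j, Measurable (Y l i j)) (m n : ℕ) :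
    Measurable fun ω => theta N m (fun l i j => Y l i j ω) n := by
  induction n with
  | zero =>
    simp only [theta, zero_add, Finset.range_one, Finset.sup'_singleton]
    exact (measurable_brwMax hY 0).sub (measurable_dsp hY m 0)
  | succ n ih =>
    simp only [theta_succ]
    exact ih.max ((measurable_brwMax hY _).sub (measurable_dsp hY m _))

/-- A majorant of the increment `θ_{n+1} - θ_n`: the largest, over the jumps performed at time `n`,
of the minimum of the jump and the displacement of its particle in the `N`-BRW restarted at time
`n - m` (at time `0` if `n < m`, through truncated subtraction). -/
def incrementMajorant (N m : ℕ) (Y : ℕ → Fin N → Fin 2 → ℝ) (n : ℕ) : ℝ :=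
  ⨆ p : Fin N × Fin 2,
    min (Y n p.1 p.2) (brw N (fun _ => 0) (fun l => Y (n - m + l)) (min m n) p.1)

theorem incrementMajorant_nonneg (m : ℕ) (hY : ∀ k i j, 0 ≤ Y k i j) (n : ℕ) :
    0 ≤ incrementMajorant N m Y n :=
  Real.iSup_nonneg fun _ => le_min (hY _ _ _) (brw_nonneg (fun _ _ _ => hY _ _ _) _ _)

theorem measurable_incrementMajorant {Ω : Type*} {_ : MeasurableSpace Ω}
    {Y : ℕ → Fin N → Fin 2 → Ω → ℝ} {m n : ℕ}
    (hY : ∀ k, n - m ≤ k → ∀ i j, Measurable (Y k i j)) :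
    Measurable fun ω => incrementMajorant N m (fun k i j => Y k i j ω) n :=
  Measurable.iSup fun p => (hY n (Nat.sub_le _ _) _ _).min
    (measurable_brw (Y := fun l => Y (n - m + l)) (fun _ _ => hY _ (Nat.le_add_right _ _)) p.1)

-- The stairs process makes up for a jump performed from the level of time `n - m`, and `θ_n` for
-- a particle that was already present; the particle can gain on both only through the smaller of
-- its last jump and its displacement since time `n - m`.
theorem theta_succ_sub_theta_le [NeZero N] (m : ℕ) (hY : ∀ k i j, 0 ≤ Y k i j) (n : ℕ) :
    theta N m Y (n + 1) - theta N m Y n ≤ incrementMajorant N m Y n := by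
  rw [theta_succ, sub_le_iff_le_add]
  refine max_le (le_add_of_nonneg_left (incrementMajorant_nonneg m hY n)) ?_
  rw [sub_le_iff_le_add]
  refine ciSup_le fun i => ?_
  obtain ⟨p, hp⟩ := exists_brwStep_eq (brw N (fun _ => 0) Y n) (Y n) i
  have hmin : min (Y n p.1 p.2) (brw N (fun _ => 0) (fun l => Y (n - m + l)) (min m n) p.1) ≤
      incrementMajorant N m Y n :=
    le_ciSup (f := fun p : Fin N × Fin 2 => min (Y n p.1 p.2)
      (brw N (fun _ => 0) (fun l => Y (n - m + l)) (min m n) p.1)) (finite_range _).bddAbove p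
  have hrestart := brw_add_le Y (n - m) (min m n) p.1
  rw [show n - m + min m n = n by omega] at hrestart
  rw [brw, hp]
  rcases min_le_iff.1 hmin with hjump | hdisplacement
  · linarith [brw_le_brwMax Y n p.1, sub_le_theta m Y le_rfl (n := n), dsp_le_dsp_succ m Y n]
  · linarith [sub_le_theta m Y (Nat.sub_le n m), dsp_add_le_dsp_succ m Y n p]

end Genealogy

section RandomWalk

/-- The law of the position after `k` steps of a random walk on `ℝ` started at `0` with independent
steps of law `ν`. -/
def walkLaw (ν : Measure ℝ) : ℕ → Measure ℝ
  | 0 => Measure.dirac 0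
  | k + 1 => walkLaw ν k ∗ ν

theorem walkLaw_zero_Ioi (ν : Measure ℝ) {z : ℝ} (hz : 0 ≤ z) : walkLaw ν 0 (Ioi z) = 0 := by
  rw [walkLaw, Measure.dirac_apply' _ measurableSet_Ioi]
  exact indicator_of_notMem (notMem_Ioi.2 hz) _

variable (ν : Measure ℝ) [IsProbabilityMeasure ν]

instance isProbabilityMeasure_walkLaw (k : ℕ) : IsProbabilityMeasure (walkLaw ν k) := by
  induction k with
  | zero => exact Measure.dirac.isProbabilityMeasure
  | succ k ih => exact Measure.probabilitymeasure_of_probabilitymeasures_conv _ _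

theorem walkLaw_succ_Ioi (k : ℕ) (z : ℝ) :
    walkLaw ν (k + 1) (Ioi z) = ∫⁻ u, walkLaw ν k (Ioi (z - u)) ∂ν := by
  rw [walkLaw, Measure.conv_comm, ← lintegral_indicator_one measurableSet_Ioi,
    Measure.lintegral_conv (measurable_one.indicator measurableSet_Ioi)]
  refine lintegral_congr fun u => ?_
  rw [← lintegral_indicator_one measurableSet_Ioi]
  refine lintegral_congr fun v => ?_
  simp only [indicator, mem_Ioi, sub_lt_iff_lt_add', Pi.one_apply]

variable {ν}

theorem walkLaw_Ioi_le_mul {b z : ℝ} {k : ℕ} (hz : k * b ≤ z) :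
    walkLaw ν k (Ioi z) ≤ k * ν (Ioi b) := by
  induction k generalizing z with
  | zero =>
    rw [walkLaw_zero_Ioi ν (by simpa only [Nat.cast_zero, zero_mul] using hz)]
    exact zero_le
  | succ k ih =>
    rw [Nat.cast_succ, add_one_mul] at hz
    have hstep (u : ℝ) : walkLaw ν k (Ioi (z - u)) ≤ k * ν (Ioi b) + (Ioi b).indicator 1 u := by
      rcases le_or_gt u b with hu | hu
      · exact (ih (by linarith)).trans le_self_add
      · rw [indicator_of_mem (mem_Ioi.2 hu)]
        exact prob_le_one.trans le_add_self
    calc walkLaw ν (k + 1) (Ioi z) ≤ ∫⁻ u, (k * ν (Ioi b) + (Ioi b).indicator 1 u) ∂ν :=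
          (walkLaw_succ_Ioi ν k z).trans_le (lintegral_mono hstep)
      _ = (k + 1 : ℕ) * ν (Ioi b) := by
          rw [lintegral_add_left measurable_const, lintegral_const, measure_univ, mul_one,
            lintegral_indicator_one measurableSet_Ioi, Nat.cast_succ, add_one_mul]

-- One big jump: either one of the steps exceeds `y`, or at least two of them exceed `b`.
theorem walkLaw_Ioi_le_of_big_jump {b y z : ℝ} {k : ℕ} (hb : 0 ≤ b) (hy : 0 ≤ y)
    (hz : k * b + y ≤ z) :
    walkLaw ν k (Ioi z) ≤ k * ν (Ioi y) + k ^ 2 * ν (Ioi b) ^ 2 := by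
  induction k generalizing z with
  | zero =>
    rw [walkLaw_zero_Ioi ν (hy.trans (by simpa only [Nat.cast_zero, zero_mul, zero_add] using hz))]
    exact zero_le
  | succ k ih =>
    rw [Nat.cast_succ, add_one_mul] at hz
    set T := k * ν (Ioi y) + k ^ 2 * ν (Ioi b) ^ 2
    have hstep (u : ℝ) : walkLaw ν k (Ioi (z - u)) ≤
        T + ((Ioi b).indicator (fun _ => k * ν (Ioi b)) u + (Ioi y).indicator 1 u) := by
      rcases le_or_gt u b with hub | hub
      · exact (ih (by linarith)).trans le_self_add
      refine le_add_left ?_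
      rw [indicator_of_mem (mem_Ioi.2 hub)]
      rcases le_or_gt u y with huy | huy
      · exact (walkLaw_Ioi_le_mul (by linarith)).trans le_self_add
      · rw [indicator_of_mem (mem_Ioi.2 huy)]
        exact prob_le_one.trans le_add_self
    calc walkLaw ν (k + 1) (Ioi z)
        ≤ ∫⁻ u, (T + ((Ioi b).indicator (fun _ => k * ν (Ioi b)) u +
            (Ioi y).indicator 1 u)) ∂ν := (walkLaw_succ_Ioi ν k z).trans_le (lintegral_mono hstep)
      _ = (k + 1) * ν (Ioi y) + (k ^ 2 + k) * ν (Ioi b) ^ 2 := by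
          rw [lintegral_add_left measurable_const, lintegral_const, measure_univ, mul_one,
            lintegral_add_left (measurable_const.indicator measurableSet_Ioi),
            lintegral_indicator_const measurableSet_Ioi, lintegral_indicator_one measurableSet_Ioi]
          ring
      _ ≤ (k + 1 : ℕ) * ν (Ioi y) + (k + 1 : ℕ) ^ 2 * ν (Ioi b) ^ 2 := by
          push_cast
          gcongr
          rw [sq, sq, add_one_mul, mul_add_one]
          exact le_self_add

end RandomWalk

section Environment

variable {Ω : Type*} {mΩ : MeasurableSpace Ω} {P : Measure Ω} {N : ℕ}
  {Y : ℕ → Fin N → Fin 2 → Ω → ℝ} {ν : Measure ℝ}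

/-- The environment of an `N`-BRW: `Y k i j` is the jump of the `j`-th child of the `i`-th particle
of generation `k`, and all these jumps are independent with law `ν`. -/
structure IIDJumps (P : Measure Ω) (Y : ℕ → Fin N → Fin 2 → Ω → ℝ) (ν : Measure ℝ) : Prop where
  measurable : ∀ k i j, Measurable (Y k i j)
  indep : iIndepFun (fun q : ℕ × Fin N × Fin 2 => Y q.1 q.2.1 q.2.2) P
  map_eq : ∀ k i j, P.map (Y k i j) = ν

theorem IIDJumps.shift (hY : IIDJumps P Y ν) (a : ℕ) : IIDJumps P (fun k => Y (a + k)) ν where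
  measurable k := hY.measurable (a + k)
  indep := hY.indep.precomp (g := fun q : ℕ × Fin N × Fin 2 => (a + q.1, q.2))
    fun q q' h => by simpa only [Prod.ext_iff, add_right_inj] using h
  map_eq k := hY.map_eq (a + k)

theorem IIDJumps.div_const (hY : IIDJumps P Y ν) (c : ℝ) :
    IIDJumps P (fun k i j ω => Y k i j ω / c) (ν.map (· / c)) where
  measurable k i j := (hY.measurable k i j).div_const c
  indep := hY.indep.comp (fun _ x => x / c) fun _ => measurable_id.div_const c
  map_eq k i j := by
    rw [← hY.map_eq k i j, Measure.map_map (by fun_prop) (hY.measurable k i j)]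
    rfl

/-- The σ-algebra generated by the jumps of the generations in `s`. It extends `brwFilt`, which is
the case of an initial segment `s`, to blocks of generations that do not start at `0`. -/
@[reducible] def jumpSigma (Y : ℕ → Fin N → Fin 2 → Ω → ℝ) (s : Set ℕ) : MeasurableSpace Ω :=
  ⨆ q ∈ {q : ℕ × Fin N × Fin 2 | q.1 ∈ s},
    MeasurableSpace.comap (Y q.1 q.2.1 q.2.2) inferInstance

theorem measurable_jumpSigma {s : Set ℕ} {k : ℕ} (hk : k ∈ s) (i : Fin N) (j : Fin 2) :
    Measurable[jumpSigma Y s] (Y k i j) :=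
  Measurable.of_comap_le (le_iSup₂_of_le (f := fun (q : ℕ × Fin N × Fin 2)
    (_ : q ∈ {q : ℕ × Fin N × Fin 2 | q.1 ∈ s}) =>
      MeasurableSpace.comap (Y q.1 q.2.1 q.2.2) inferInstance) (k, i, j) hk le_rfl)

theorem IIDJumps.jumpSigma_le (hY : IIDJumps P Y ν) (s : Set ℕ) :
    jumpSigma Y s ≤ mΩ :=
  iSup₂_le fun q _ => (hY.measurable q.1 q.2.1 q.2.2).comap_le

theorem IIDJumps.indep_jumpSigma (hY : IIDJumps P Y ν) {s t : Set ℕ} (hst : Disjoint s t) :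
    Indep (jumpSigma Y s) (jumpSigma Y t) P :=
  indep_iSup_of_disjoint
    (m := fun q : ℕ × Fin N × Fin 2 => MeasurableSpace.comap (Y q.1 q.2.1 q.2.2) inferInstance)
    (fun q => (hY.measurable q.1 q.2.1 q.2.2).comap_le) hY.indep (hst.preimage Prod.fst)

theorem brwFilt_eq_jumpSigma (Y : ℕ → Fin N → Fin 2 → Ω → ℝ) (n : ℕ) :
    brwFilt N Y n = jumpSigma Y (Iio n) :=
  le_antisymm
    (iSup₂_le fun _ hk => iSup₂_le fun i j => (measurable_jumpSigma (mem_Iio.2 hk) i j).comap_le)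
    (iSup₂_le fun q hq => le_iSup₂_of_le q.1 hq <| le_iSup₂_of_le (f := fun i j =>
      MeasurableSpace.comap (Y q.1 i j) inferInstance) q.2.1 q.2.2 le_rfl)

theorem brwFilt_div_const (Y : ℕ → Fin N → Fin 2 → Ω → ℝ) {c : ℝ} (hc : c ≠ 0) (n : ℕ) :
    brwFilt N (fun k i j ω => Y k i j ω / c) n = brwFilt N Y n := by
  have hcomap (Z : Ω → ℝ) : MeasurableSpace.comap (fun ω => Z ω / c) inferInstance =
      MeasurableSpace.comap Z inferInstance := by
    refine le_antisymm ((comap_measurable Z).div_const c).comap_le ?_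
    have hmul : Z = fun ω => Z ω / c * c := funext fun ω => (div_mul_cancel₀ _ hc).symm
    conv_lhs => rw [hmul]
    exact ((comap_measurable fun ω => Z ω / c).mul_const c).comap_le
  simp only [brwFilt, hcomap]

theorem IIDJumps.measurable_brw (hY : IIDJumps P Y ν) (k : ℕ) (i : Fin N) :
    Measurable fun ω => brw N (fun _ => 0) (fun l i j => Y l i j ω) k i :=
  _root_.measurable_brw (fun l _ => hY.measurable l) i

theorem IIDJumps.indepFun_brw (hY : IIDJumps P Y ν) (k : ℕ) (i i' : Fin N) (j : Fin 2) :
    IndepFun (fun ω => brw N (fun _ => 0) (fun l i j => Y l i j ω) k i) (Y k i' j) P := by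
  have hpast : Measurable[jumpSigma Y (Iio k)]
      fun ω => brw N (fun _ => 0) (fun l i j => Y l i j ω) k i :=
    _root_.measurable_brw (fun l hl => measurable_jumpSigma (mem_Iio.2 hl)) i
  rw [IndepFun_iff_Indep]
  exact indep_of_indep_of_le_left (indep_of_indep_of_le_right
    (hY.indep_jumpSigma (disjoint_singleton_right.2 self_notMem_Iio))
    (measurable_jumpSigma (mem_singleton k) i' j).comap_le) hpast.comap_le

theorem IIDJumps.measure_lt_jump_and_lt_brw (hY : IIDJumps P Y ν) (k : ℕ) (i : Fin N) (j : Fin 2)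
    (x : ℝ) :
    P {ω | x < Y k i j ω ∧ x < brw N (fun _ => 0) (fun l i j => Y l i j ω) k i} =
      ν (Ioi x) * P {ω | x < brw N (fun _ => 0) (fun l i j => Y l i j ω) k i} := by
  rw [← hY.map_eq k i j, Measure.map_apply (hY.measurable k i j) measurableSet_Ioi]
  exact (hY.indepFun_brw k i i j).symm.measure_inter_preimage_eq_mul _ _ measurableSet_Ioi
    measurableSet_Ioi

variable [IsProbabilityMeasure P] [IsProbabilityMeasure ν]

theorem IIDJumps.lintegral_brw_add (hY : IIDJumps P Y ν) {f : ℝ → ENNReal} (hf : Measurable f)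
    (k : ℕ) (i : Fin N) (j : Fin 2) :
    ∫⁻ ω, f (brw N (fun _ => 0) (fun l i j => Y l i j ω) k i + Y k i j ω) ∂P =
      ∫⁻ ω, ∫⁻ u, f (brw N (fun _ => 0) (fun l i j => Y l i j ω) k i + u) ∂ν ∂P := by
  have hB := hY.measurable_brw k i
  have hconv := (hY.indepFun_brw k i i j).map_add_eq_map_conv_map₀ hB.aemeasurable
    (hY.measurable k i j).aemeasurable
  rw [hY.map_eq] at hconv
  calc _ = ∫⁻ u, f u ∂(P.map ((fun ω => brw N (fun _ => 0) (fun l i j => Y l i j ω) k i) +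
          Y k i j)) := (lintegral_map hf (hB.add (hY.measurable k i j))).symm
    _ = _ := by
        rw [hconv, Measure.lintegral_conv hf, lintegral_map (by fun_prop) hB]

-- Selection only removes particles: without it there are `N * 2 ^ k` of them at time `k`, each
-- performing a random walk with step law `ν`.
theorem IIDJumps.sum_lintegral_brw_le (hY : IIDJumps P Y ν) {f : ℝ → ENNReal} (hf : Measurable f)
    (k : ℕ) :
    ∑ i, ∫⁻ ω, f (brw N (fun _ => 0) (fun l i j => Y l i j ω) k i) ∂P ≤
      N * 2 ^ k * ∫⁻ u, f u ∂(walkLaw ν k) := by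
  induction k generalizing f with
  | zero =>
    simp only [brw, walkLaw, lintegral_const, measure_univ, lintegral_dirac, mul_one,
      Finset.sum_const, Finset.card_univ, Fintype.card_fin, nsmul_eq_mul, pow_zero, le_refl]
  | succ k ih =>
    let B (ω : Ω) : Fin N → ℝ := brw N (fun _ => 0) (fun l i j => Y l i j ω) k
    have hB (i : Fin N) : Measurable fun ω => B ω i := hY.measurable_brw k i
    calc ∑ i, ∫⁻ ω, f (brw N (fun _ => 0) (fun l i j => Y l i j ω) (k + 1) i) ∂P
        = ∫⁻ ω, ∑ i, f (brwStep N (B ω) (fun i j => Y k i j ω) i) ∂P :=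
          (lintegral_finsetSum _ fun i _ => hf.comp (hY.measurable_brw (k + 1) i)).symm
      _ ≤ ∫⁻ ω, ∑ q : Fin N × Fin 2, f (B ω q.1 + Y k q.1 q.2 ω) ∂P :=
          lintegral_mono fun ω => sum_brwStep_le (B ω) (fun i j => Y k i j ω) f
      _ = ∑ q : Fin N × Fin 2, ∫⁻ ω, ∫⁻ u, f (B ω q.1 + u) ∂ν ∂P := by
          rw [lintegral_finsetSum]
          swap
          · exact fun q _ => hf.comp ((hB q.1).add (hY.measurable _ _ _))
          exact Finset.sum_congr rfl fun q _ => hY.lintegral_brw_add hf k q.1 q.2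
      _ = 2 * ∑ i, ∫⁻ ω, ∫⁻ u, f (B ω i + u) ∂ν ∂P := by
          simp only [Fintype.sum_prod_type, Finset.sum_const, Finset.card_univ, Fintype.card_fin,
            nsmul_eq_mul, Nat.cast_ofNat, Finset.mul_sum]
      _ ≤ 2 * (N * 2 ^ k * ∫⁻ u, ∫⁻ v, f (u + v) ∂ν ∂(walkLaw ν k)) := by
          gcongr
          exact ih (f := fun u => ∫⁻ v, f (u + v) ∂ν)
            (hf.comp (measurable_fst.add measurable_snd)).lintegral_prod_right'
      _ = N * 2 ^ (k + 1) * ∫⁻ u, f u ∂(walkLaw ν (k + 1)) := by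
          rw [walkLaw, Measure.lintegral_conv hf]
          ring

end Environment

section IncrementTail

/-- The bound on the tail at `x` of the increments of `θ` obtained from the tail function `T` of the
jumps: a union bound over `2N` jumps larger than `x`, times the expected number of particles that
move by more than `x` in `m` generations. -/
def incrementTailBound (T : ℝ → ℝ) (N m : ℕ) (x : ℝ) : ℝ :=
  2 * T x * (N * 2 ^ m * (m * T (x / 2) + m ^ 2 * T (x / (2 * m)) ^ 2))

variable {Ω : Type*} {mΩ : MeasurableSpace Ω} {P : Measure Ω} [IsProbabilityMeasure P] {N : ℕ}
  {Y : ℕ → Fin N → Fin 2 → Ω → ℝ} {ν : Measure ℝ} [IsProbabilityMeasure ν]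

theorem IIDJumps.sum_measure_lt_brw_le (hY : IIDJumps P Y ν) {k m : ℕ} (hkm : k ≤ m) {x : ℝ}
    (hx : 0 ≤ x) :
    ∑ i, P {ω | x < brw N (fun _ => 0) (fun l i j => Y l i j ω) k i} ≤
      N * 2 ^ m * (m * ν (Ioi (x / 2)) + m ^ 2 * ν (Ioi (x / (2 * m))) ^ 2) := by
  have hlevel : k * (x / (2 * m)) + x / 2 ≤ x := by
    have hratio : (k : ℝ) / m ≤ 1 := div_le_one_of_le₀ (Nat.cast_le.2 hkm) m.cast_nonneg
    calc k * (x / (2 * m)) + x / 2 = k / m * (x / 2) + x / 2 := by ring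
      _ ≤ 1 * (x / 2) + x / 2 := by gcongr
      _ = x := by ring
  calc ∑ i, P {ω | x < brw N (fun _ => 0) (fun l i j => Y l i j ω) k i}
      = ∑ i, ∫⁻ ω, (Ioi x).indicator 1 (brw N (fun _ => 0) (fun l i j => Y l i j ω) k i) ∂P :=
        Finset.sum_congr rfl fun i _ =>
          (lintegral_indicator_one (hY.measurable_brw k i measurableSet_Ioi)).symm
    _ ≤ N * 2 ^ k * walkLaw ν k (Ioi x) := by
        rw [← lintegral_indicator_one measurableSet_Ioi]
        exact hY.sum_lintegral_brw_le (measurable_one.indicator measurableSet_Ioi) k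
    _ ≤ N * 2 ^ k * (k * ν (Ioi (x / 2)) + k ^ 2 * ν (Ioi (x / (2 * m))) ^ 2) := by
        gcongr
        exact walkLaw_Ioi_le_of_big_jump (by positivity) (by positivity) hlevel
    _ ≤ N * 2 ^ m * (m * ν (Ioi (x / 2)) + m ^ 2 * ν (Ioi (x / (2 * m))) ^ 2) := by
        gcongr
        exact one_le_two

theorem IIDJumps.measure_lt_incrementMajorant_le [NeZero N] (hY : IIDJumps P Y ν) (m n : ℕ) {x : ℝ}
    (hx : 0 ≤ x) :
    P {ω | x < incrementMajorant N m (fun k i j => Y k i j ω) n} ≤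
      2 * ν (Ioi x) * (N * 2 ^ m * (m * ν (Ioi (x / 2)) + m ^ 2 * ν (Ioi (x / (2 * m))) ^ 2)) := by
  have hY' := hY.shift (n - m)
  have hn : n - m + min m n = n := by omega
  let D (ω : Ω) : Fin N → ℝ := brw N (fun _ => 0) (fun l i j => Y (n - m + l) i j ω) (min m n)
  calc P {ω | x < incrementMajorant N m (fun k i j => Y k i j ω) n}
      ≤ P (⋃ q : Fin N × Fin 2, {ω | x < Y n q.1 q.2 ω ∧ x < D ω q.1}) := by
        refine measure_mono fun ω hω => mem_iUnion.2 ?_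
        rw [mem_ofPred_eq, incrementMajorant] at hω
        obtain ⟨q, hq⟩ := exists_lt_of_lt_ciSup hω
        exact ⟨q, lt_min_iff.1 hq⟩
    _ ≤ ∑ q : Fin N × Fin 2, P {ω | x < Y n q.1 q.2 ω ∧ x < D ω q.1} :=
        measure_iUnion_fintype_le _ _
    _ = ∑ q : Fin N × Fin 2, ν (Ioi x) * P {ω | x < D ω q.1} := by
        refine Finset.sum_congr rfl fun q _ => ?_
        have hq := hY'.measure_lt_jump_and_lt_brw (min m n) q.1 q.2 x
        rwa [hn] at hq
    _ = 2 * ν (Ioi x) * ∑ i, P {ω | x < D ω i} := by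
        simp only [Fintype.sum_prod_type, Finset.sum_const, Finset.card_univ, Fintype.card_fin,
          nsmul_eq_mul, Nat.cast_ofNat, Finset.mul_sum, mul_assoc]
    _ ≤ _ := by
        gcongr
        exact hY'.sum_measure_lt_brw_le (min_le_left m n) hx

theorem IIDJumps.tail_incrementMajorant_le [NeZero N] (hY : IIDJumps P Y ν) (m n : ℕ) {x : ℝ}
    (hx : 0 ≤ x) :
    tail P (fun ω => incrementMajorant N m (fun k i j => Y k i j ω) n) x ≤
      incrementTailBound (fun y => ν.real (Ioi y)) N m x := by
  refine (ENNReal.toReal_mono (by finiteness)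
    (hY.measure_lt_incrementMajorant_le m n hx)).trans_eq ?_
  rw [ENNReal.toReal_mul, ENNReal.toReal_mul, ENNReal.toReal_mul,
    ENNReal.toReal_add (by finiteness) (by finiteness)]
  simp only [incrementTailBound, Measure.real, ENNReal.toReal_mul, ENNReal.toReal_pow,
    ENNReal.toReal_natCast, ENNReal.toReal_ofNat]

end IncrementTail

section Moments

theorem lintegral_Ioc_ofReal_rpow {r s : ℝ} (hr : 0 ≤ r) (hs : -1 < s) :
    ∫⁻ t in Ioc 0 r, ENNReal.ofReal (t ^ s) = ENNReal.ofReal (r ^ (s + 1) / (s + 1)) := by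
  have hint : IntegrableOn (fun t : ℝ => t ^ s) (Ioc 0 r) :=
    (intervalIntegrable_iff_integrableOn_Ioc_of_le hr).1
      (intervalIntegral.intervalIntegrable_rpow' hs)
  rw [← ofReal_integral_eq_lintegral_ofReal hint, ← intervalIntegral.integral_of_le hr,
    integral_rpow (Or.inl hs), Real.zero_rpow (by linarith), sub_zero]
  filter_upwards [ae_restrict_mem measurableSet_Ioc] with t ht using Real.rpow_nonneg ht.1.le s

theorem lintegral_Ioi_ofReal_rpow {r s : ℝ} (hr : 0 < r) (hs : s < -1) :
    ∫⁻ t in Ioi r, ENNReal.ofReal (t ^ s) = ENNReal.ofReal (-r ^ (s + 1) / (s + 1)) := by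
  rw [← ofReal_integral_eq_lintegral_ofReal (integrableOn_Ioi_rpow_of_lt hs hr),
    integral_Ioi_rpow_of_lt hs hr]
  filter_upwards [ae_restrict_mem measurableSet_Ioi] with t ht
    using Real.rpow_nonneg (hr.trans ht).le s

variable {Ω : Type*} {mΩ : MeasurableSpace Ω} {P : Measure Ω} [IsProbabilityMeasure P] {W : Ω → ℝ}
  {r p q : ℝ}

theorem setLIntegral_Ioi_tail_mul_rpow_le (hr : 0 < r) (hpq : p < q)
    (htail : ∀ x, r ≤ x → tail P W x ≤ (r / x) ^ q) :
    ∫⁻ t in Ioi r, P {ω | t < W ω} * ENNReal.ofReal (t ^ (p - 1)) ≤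
      ENNReal.ofReal (r ^ p / (q - p)) := by
  calc _ ≤ ∫⁻ t in Ioi r, ENNReal.ofReal (r ^ q) * ENNReal.ofReal (t ^ (p - 1 - q)) := by
        refine setLIntegral_mono' measurableSet_Ioi fun t ht => ?_
        have ht0 : 0 < t := hr.trans ht
        have hPt : P {ω | t < W ω} ≤ ENNReal.ofReal ((r / t) ^ q) :=
          (ENNReal.le_ofReal_iff_toReal_le (by finiteness) (by positivity)).2
            (htail t (le_of_lt ht))
        refine (mul_le_mul_left hPt _).trans_eq ?_
        rw [← ENNReal.ofReal_mul (by positivity), ← ENNReal.ofReal_mul (by positivity),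
          Real.div_rpow hr.le ht0.le, Real.rpow_sub ht0 (p - 1) q, div_mul_comm, mul_comm]
    _ = ENNReal.ofReal (r ^ p / (q - p)) := by
        rw [lintegral_const_mul _ (by fun_prop), lintegral_Ioi_ofReal_rpow hr (by linarith),
          ← ENNReal.ofReal_mul (by positivity), show p - 1 - q + 1 = -(q - p) by ring,
          neg_div_neg_eq, mul_div_assoc', ← Real.rpow_add hr, show q + -(q - p) = p by ring]

theorem lintegral_ofReal_rpow_le_of_tail_le (hW : Measurable W) (hW0 : ∀ ω, 0 ≤ W ω) (hr : 0 < r)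
    (hp : 0 < p) (hpq : p < q) (htail : ∀ x, r ≤ x → tail P W x ≤ (r / x) ^ q) :
    ∫⁻ ω, ENNReal.ofReal (W ω ^ p) ∂P ≤ ENNReal.ofReal ((1 + p / (q - p)) * r ^ p) := by
  have hqp : 0 < q - p := sub_pos.2 hpq
  have hlow : ∫⁻ t in Ioc 0 r, P {ω | t < W ω} * ENNReal.ofReal (t ^ (p - 1)) ≤
      ENNReal.ofReal (r ^ p / p) := by
    calc _ ≤ ∫⁻ t in Ioc 0 r, ENNReal.ofReal (t ^ (p - 1)) :=
          lintegral_mono fun t => mul_le_of_le_one_left' prob_le_one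
      _ = ENNReal.ofReal (r ^ p / p) := by
          rw [lintegral_Ioc_ofReal_rpow hr.le (by linarith), sub_add_cancel]
  have hhigh := setLIntegral_Ioi_tail_mul_rpow_le hr hpq htail
  calc ∫⁻ ω, ENNReal.ofReal (W ω ^ p) ∂P
      = ENNReal.ofReal p * ((∫⁻ t in Ioc 0 r, P {ω | t < W ω} * ENNReal.ofReal (t ^ (p - 1))) +
          ∫⁻ t in Ioi r, P {ω | t < W ω} * ENNReal.ofReal (t ^ (p - 1))) := by
        rw [lintegral_rpow_eq_lintegral_meas_lt_mul P (ae_of_all _ hW0) hW.aemeasurable hp,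
          ← Ioc_union_Ioi_eq_Ioi hr.le, lintegral_union measurableSet_Ioi Ioc_disjoint_Ioi_same]
    _ ≤ ENNReal.ofReal p * (ENNReal.ofReal (r ^ p / p) + ENNReal.ofReal (r ^ p / (q - p))) := by
        gcongr
    _ = ENNReal.ofReal ((1 + p / (q - p)) * r ^ p) := by
        rw [← ENNReal.ofReal_add (by positivity) (by positivity), ← ENNReal.ofReal_mul hp.le]
        congr 1
        field_simp

theorem integrable_rpow_and_integral_rpow_le_of_tail_le (hW : Measurable W) (hW0 : ∀ ω, 0 ≤ W ω)
    (hr : 0 < r) (hp : 0 ≤ p) (hpq : p < q) (htail : ∀ x, r ≤ x → tail P W x ≤ (r / x) ^ q) :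
    Integrable (fun ω => W ω ^ p) P ∧ ∫ ω, W ω ^ p ∂P ≤ (1 + p / (q - p)) * r ^ p := by
  rcases hp.eq_or_lt with rfl | hp
  · simp only [Real.rpow_zero, integrable_const, integral_const, probReal_univ, smul_eq_mul,
      zero_div, add_zero, mul_one, le_refl, and_self]
  have hnonneg : 0 ≤ᵐ[P] fun ω => W ω ^ p := ae_of_all _ fun ω => Real.rpow_nonneg (hW0 ω) p
  have hmeas : AEStronglyMeasurable (fun ω => W ω ^ p) P := (hW.pow_const p).aestronglyMeasurable
  have hle := lintegral_ofReal_rpow_le_of_tail_le hW hW0 hr hp hpq htail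
  constructor
  · exact ⟨hmeas, (hasFiniteIntegral_iff_ofReal hnonneg).2 (hle.trans_lt ENNReal.ofReal_lt_top)⟩
  · rw [integral_eq_lintegral_of_nonneg_ae hnonneg hmeas]
    exact ENNReal.toReal_le_of_le_ofReal (by have := sub_pos.2 hpq; positivity) hle

theorem condExp_le_integral_of_indep {F G : MeasurableSpace Ω} (hF : F ≤ mΩ) (hG : G ≤ mΩ)
    (hFG : Indep G F P) {f g : Ω → ℝ} (hf : Integrable f P) (hg : Integrable g P)
    (hgG : Measurable[G] g) (hfg : f ≤ g) : ∀ᵐ ω ∂P, (P[f | F]) ω ≤ ∫ ω, g ω ∂P := by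
  filter_upwards [condExp_mono (m := F) hf hg (ae_of_all _ hfg),
    condExp_indep_eq hG hF hgG.stronglyMeasurable hFG] with ω hle heq
  exact hle.trans_eq heq

end Moments

section ConditionalMoment

variable {Ω : Type*} {mΩ : MeasurableSpace Ω} {P : Measure Ω} [IsProbabilityMeasure P] {N : ℕ}
  {Y : ℕ → Fin N → Fin 2 → Ω → ℝ} {ν : Measure ℝ} [IsProbabilityMeasure ν]

theorem IIDJumps.condExp_theta_increment_rpow_le [NeZero N] (hY : IIDJumps P Y ν)
    (hY0 : ∀ k i j ω, 0 ≤ Y k i j ω) {m : ℕ} {r p q : ℝ} (hr : 0 < r) (hp : 0 ≤ p) (hpq : p < q)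
    (htail : ∀ x, r ≤ x → incrementTailBound (fun y => ν.real (Ioi y)) N m x ≤ (r / x) ^ q)
    (n : ℕ) :
    ∀ᵐ ω ∂P, (P[fun ω => (theta N m (fun k i j => Y k i j ω) (n + 1) -
        theta N m (fun k i j => Y k i j ω) n) ^ p | brwFilt N Y (n - m)]) ω ≤
      (1 + p / (q - p)) * r ^ p := by
  let Δ (ω : Ω) : ℝ := theta N m (fun k i j => Y k i j ω) (n + 1) -
    theta N m (fun k i j => Y k i j ω) n
  let W (ω : Ω) : ℝ := incrementMajorant N m (fun k i j => Y k i j ω) n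
  have hΔ0 (ω : Ω) : 0 ≤ Δ ω := sub_nonneg.2 (theta_le_theta_succ m _ n)
  have hΔW (ω : Ω) : Δ ω ^ p ≤ W ω ^ p :=
    Real.rpow_le_rpow (hΔ0 ω) (theta_succ_sub_theta_le m (fun k i j => hY0 k i j ω) n) hp
  have hW0 (ω : Ω) : 0 ≤ W ω := incrementMajorant_nonneg m (fun k i j => hY0 k i j ω) n
  have hWrecent : Measurable[jumpSigma Y (Ici (n - m))] W :=
    measurable_incrementMajorant fun k hk => measurable_jumpSigma (mem_Ici.2 hk)
  obtain ⟨hWint, hWle⟩ := integrable_rpow_and_integral_rpow_le_of_tail_le (P := P)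
    (hWrecent.mono (hY.jumpSigma_le _) le_rfl) hW0 hr hp hpq fun x hx =>
      (hY.tail_incrementMajorant_le m n (hr.le.trans hx)).trans (htail x hx)
  have hΔint : Integrable (fun ω => Δ ω ^ p) P := by
    refine hWint.mono' (Measurable.aestronglyMeasurable (.pow_const
      ((measurable_theta hY.measurable m _).sub (measurable_theta hY.measurable m _)) p))
      (ae_of_all _ fun ω => ?_)
    rw [Real.norm_of_nonneg (Real.rpow_nonneg (hΔ0 ω) p)]
    exact hΔW ω
  rw [brwFilt_eq_jumpSigma]
  filter_upwards [condExp_le_integral_of_indep (hY.jumpSigma_le (Iio (n - m))) (hY.jumpSigma_le _)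
    (hY.indep_jumpSigma (Iio_disjoint_Ici le_rfl).symm) hΔint hWint (hWrecent.pow_const p) hΔW]
    with ω hω using hω.trans hWle

end ConditionalMoment

section Tail

variable {Ω : Type*} [MeasurableSpace Ω]

theorem map_div_const_real_Ioi (P : Measure Ω) {X : Ω → ℝ} (hX : Measurable X) {c : ℝ}
    (hc : 0 < c) (y : ℝ) :
    ((P.map X).map (· / c)).real (Ioi y) = tail P X (c * y) := by
  rw [measureReal_def, Measure.map_map (by fun_prop) hX,
    Measure.map_apply (by fun_prop) measurableSet_Ioi]
  simp only [tail, preimage, Function.comp_apply, mem_Ioi, lt_div_iff₀' hc]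

variable (P : Measure Ω) [IsProbabilityMeasure P] {X : Ω → ℝ}

theorem tail_antitone (X : Ω → ℝ) : Antitone (tail P X) := fun _ _ hxy =>
  ENNReal.toReal_mono (measure_ne_top _ _) (measure_mono fun _ hω => lt_of_le_of_lt hxy hω)

theorem tail_eq_one_sub_cdf (hX : Measurable X) (x : ℝ) : tail P X x = 1 - cdf (P.map X) x := by
  have := Measure.isProbabilityMeasure_map (μ := P) hX.aemeasurable
  rw [cdf_eq_real, ← probReal_compl_eq_one_sub measurableSet_Iic, compl_Iic, measureReal_def,
    Measure.map_apply hX measurableSet_Ioi]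
  rfl

theorem tendsto_tail_atTop (hX : Measurable X) : Tendsto (tail P X) atTop (nhds 0) := by
  rw [funext (tail_eq_one_sub_cdf P hX), ← sub_self (1 : ℝ)]
  exact tendsto_const_nhds.sub (tendsto_cdf_atTop _)

theorem tendsto_tail_nhdsGT (hX : Measurable X) (x : ℝ) :
    Tendsto (tail P X) (nhdsWithin x (Ioi x)) (nhds (tail P X x)) := by
  rw [funext (tail_eq_one_sub_cdf P hX)]
  exact tendsto_const_nhds.sub
    (((cdf (P.map X)).right_continuous x).mono Ioi_subset_Ici_self)

theorem tail_hinv_le_inv (hX : Measurable X) {y : ℝ} (hy : 0 < y) :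
    tail P X (hinv P X y) ≤ y⁻¹ := by
  have hne : {x : ℝ | 0 ≤ x ∧ tail P X x ≤ y⁻¹}.Nonempty :=
    ((eventually_ge_atTop 0).and
      ((tendsto_tail_atTop P hX).eventually_le_const (inv_pos.2 hy))).exists
  refine le_of_tendsto (tendsto_tail_nhdsGT P hX _) ?_
  filter_upwards [self_mem_nhdsWithin] with x hx
  obtain ⟨z, ⟨-, hz⟩, hzx⟩ := exists_lt_of_csInf_lt hne hx
  exact (tail_antitone P X hzx.le).trans hz

end Tail

section DyadicDecay

/-- Beyond `x₀`, doubling the argument divides `f` by a factor between `2 ^ b` and `2 ^ a`. This is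
the form in which regular variation of a tail function is used. -/
structure DyadicDecay (f : ℝ → ℝ) (x₀ b a : ℝ) : Prop where
  antitone : Antitone f
  pos : ∀ x, 0 < f x
  x₀_pos : 0 < x₀
  le_of_two_mul : ∀ x, x₀ ≤ x → 2 ^ b * f (2 * x) ≤ f x
  le_two_mul : ∀ x, x₀ ≤ x → f x ≤ 2 ^ a * f (2 * x)

theorem exists_dyadicDecay {f : ℝ → ℝ} (hf : Antitone f) (hf0 : ∀ x, 0 ≤ f x) {α b a : ℝ}
    (hlim : Tendsto (fun x => f x / f (2 * x)) atTop (nhds (2 ^ α))) (hb : b < α) (ha : α < a) :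
    ∃ x₀, DyadicDecay f x₀ b a := by
  have hlow : (2 : ℝ) ^ b < 2 ^ α := Real.rpow_lt_rpow_of_exponent_lt one_lt_two hb
  have hhigh : (2 : ℝ) ^ α < 2 ^ a := Real.rpow_lt_rpow_of_exponent_lt one_lt_two ha
  obtain ⟨x₀, hx₀⟩ := eventually_atTop.1
    ((hlim.eventually_mem (Ioo_mem_nhds hlow hhigh)).and (eventually_gt_atTop 0))
  have hpos_two_mul (x : ℝ) (hx : x₀ ≤ x) : 0 < f (2 * x) := (hf0 _).lt_of_ne' fun hzero => by
    have hratio := (hx₀ x hx).1.1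
    rw [hzero, div_zero] at hratio
    exact absurd hratio (not_lt.2 (by positivity))
  refine ⟨x₀, hf, fun x => ?_, (hx₀ x₀ le_rfl).2, fun x hx => ?_, fun x hx => ?_⟩
  · have hmax : 0 < max x₀ x := (hx₀ _ (le_max_left x₀ x)).2
    exact (hpos_two_mul _ (le_max_left x₀ x)).trans_le
      (hf ((le_max_right x₀ x).trans (by linarith)))
  · exact ((lt_div_iff₀ (hpos_two_mul x hx)).1 (hx₀ x hx).1.1).le
  · exact ((div_lt_iff₀ (hpos_two_mul x hx)).1 (hx₀ x hx).1.2).le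

namespace DyadicDecay

variable {f : ℝ → ℝ} {x₀ b a : ℝ}

theorem le_two_pow_mul (hf : DyadicDecay f x₀ b a) {x : ℝ} (hx : x₀ ≤ x) (n : ℕ) :
    f x ≤ (2 ^ n) ^ a * f (2 ^ n * x) := by
  induction n with
  | zero => rw [pow_zero, Real.one_rpow, one_mul, one_mul]
  | succ n ih =>
    have hxn : x₀ ≤ 2 ^ n * x :=
      hx.trans (le_mul_of_one_le_left (hf.x₀_pos.le.trans hx) (one_le_pow₀ one_le_two))
    calc f x ≤ (2 ^ n) ^ a * f (2 ^ n * x) := ih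
      _ ≤ (2 ^ n) ^ a * (2 ^ a * f (2 * (2 ^ n * x))) := by gcongr; exact hf.le_two_mul _ hxn
      _ = (2 ^ (n + 1)) ^ a * f (2 ^ (n + 1) * x) := by
          rw [pow_succ', Real.mul_rpow zero_le_two (by positivity), mul_assoc 2]
          ring

theorem two_pow_mul_le (hf : DyadicDecay f x₀ b a) {x : ℝ} (hx : x₀ ≤ x) (n : ℕ) :
    (2 ^ n) ^ b * f (2 ^ n * x) ≤ f x := by
  induction n with
  | zero => rw [pow_zero, Real.one_rpow, one_mul, one_mul]
  | succ n ih =>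
    have hxn : x₀ ≤ 2 ^ n * x :=
      hx.trans (le_mul_of_one_le_left (hf.x₀_pos.le.trans hx) (one_le_pow₀ one_le_two))
    calc (2 ^ (n + 1)) ^ b * f (2 ^ (n + 1) * x)
        = (2 ^ n) ^ b * (2 ^ b * f (2 * (2 ^ n * x))) := by
          rw [pow_succ', Real.mul_rpow zero_le_two (by positivity), mul_assoc 2]
          ring
      _ ≤ (2 ^ n) ^ b * f (2 ^ n * x) := by gcongr; exact hf.le_of_two_mul _ hxn
      _ ≤ f x := ih

theorem le_mul (hf : DyadicDecay f x₀ b a) (ha : 0 ≤ a) {x l : ℝ} (hx : x₀ ≤ x) (hl : 1 ≤ l) :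
    f x ≤ (2 * l) ^ a * f (l * x) := by
  obtain ⟨n, hnl, hln⟩ := exists_nat_pow_near hl one_lt_two
  have hx0 : 0 ≤ x := hf.x₀_pos.le.trans hx
  calc f x ≤ (2 ^ (n + 1)) ^ a * f (2 ^ (n + 1) * x) := hf.le_two_pow_mul hx (n + 1)
    _ ≤ (2 * l) ^ a * f (l * x) := by
        have := (hf.pos (2 ^ (n + 1) * x)).le
        gcongr
        · rw [pow_succ']
          gcongr
        · exact hf.antitone (by gcongr)

theorem mul_le (hf : DyadicDecay f x₀ b a) (hb : 0 ≤ b) {x l : ℝ} (hx : x₀ ≤ x) (hl : 1 ≤ l) :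
    f (l * x) ≤ (2 / l) ^ b * f x := by
  obtain ⟨n, hnl, hln⟩ := exists_nat_pow_near hl one_lt_two
  have := one_pos.trans_le hl
  have hx0 : 0 ≤ x := hf.x₀_pos.le.trans hx
  calc f (l * x) ≤ f (2 ^ n * x) := hf.antitone (by gcongr)
    _ ≤ ((2 ^ n) ^ b)⁻¹ * f x := by
        rw [le_inv_mul_iff₀ (by positivity)]
        exact hf.two_pow_mul_le hx n
    _ ≤ (2 / l) ^ b * f x := by
        have := (hf.pos x).le
        rw [← Real.inv_rpow (by positivity)]
        gcongr
        rw [inv_le_comm₀ (by positivity) (by positivity), inv_div, div_le_iff₀' two_pos,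
          ← pow_succ']
        exact hln.le

theorem mul_le_of_rpow_mul_lt (hf : DyadicDecay f x₀ b a) (ha : 0 ≤ a) {c l : ℝ} (hl : 1 ≤ l)
    (hlt : (2 * l) ^ a * f c < f x₀) : l * x₀ ≤ c := by
  by_contra! hc
  refine hlt.not_ge ((hf.le_mul ha le_rfl hl).trans ?_)
  gcongr
  exact hf.antitone hc.le

-- Potter's bounds: the exponent `a` governs the arguments below `c`, the exponent `b` those above.
theorem scaled_le (hf : DyadicDecay f x₀ b a) (hb : 0 ≤ b) (hba : b ≤ a) {c r l x : ℝ}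
    (hr : 0 < r) (hr1 : r ≤ 1) (hl : 1 ≤ l) (hc : l / r * x₀ ≤ c) (hx : r ≤ x) :
    f (c * (x / l)) ≤ (r / x) ^ b * ((2 / (r / l)) ^ a * f c) := by
  have hl0 : 0 < l := one_pos.trans_le hl
  have hx0 : 0 < x := hr.trans_le hx
  have hfc := hf.pos c
  have hratio : r / x ≤ 1 := div_le_one_of_le₀ hx hx0.le
  have hlr : 1 ≤ 2 / (r / l) := (one_le_div (by positivity)).2
    (((div_le_one₀ hl0).2 (hr1.trans hl)).trans one_le_two)
  have hc0 : 0 ≤ c := le_trans (mul_nonneg (by positivity) hf.x₀_pos.le) hc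
  have hxl : x₀ ≤ c * (x / l) :=
    calc x₀ = l / r * x₀ * (r / l) := by field_simp
      _ ≤ c * (x / l) := by gcongr
  have hsplit (e : ℝ) : (2 / (x / l)) ^ e = (r / x) ^ e * (2 / (r / l)) ^ e := by
    rw [← Real.mul_rpow (by positivity) (by positivity)]
    congr 1
    field_simp
  rcases le_total (x / l) 1 with hbelow | habove
  · have hinv : 1 ≤ (x / l)⁻¹ := (one_le_inv₀ (div_pos hx0 hl0)).2 hbelow
    calc f (c * (x / l)) ≤ (2 * (x / l)⁻¹) ^ a * f ((x / l)⁻¹ * (c * (x / l))) :=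
          hf.le_mul (hb.trans hba) hxl hinv
      _ = (r / x) ^ a * ((2 / (r / l)) ^ a * f c) := by
          rw [← div_eq_mul_inv, hsplit, mul_left_comm, inv_mul_cancel₀ (by positivity), mul_one,
            mul_assoc]
      _ ≤ (r / x) ^ b * ((2 / (r / l)) ^ a * f c) := by
          gcongr ?_ * _
          exact Real.rpow_le_rpow_of_exponent_ge (by positivity) hratio hba
  · have hcx₀ : x₀ ≤ c :=
      (le_mul_of_one_le_left hf.x₀_pos.le ((one_le_div hr).2 (hr1.trans hl))).trans hc
    calc f (c * (x / l)) = f (x / l * c) := by rw [mul_comm]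
      _ ≤ (2 / (x / l)) ^ b * f c := hf.mul_le hb hcx₀ habove
      _ = (r / x) ^ b * ((2 / (r / l)) ^ b * f c) := by rw [hsplit, mul_assoc]
      _ ≤ (r / x) ^ b * ((2 / (r / l)) ^ a * f c) := by gcongr

end DyadicDecay

end DyadicDecay

section Subpolynomial

/-- Subpolynomial growth: `u N = O(N ^ e)` for every `e > 0`. -/
def Subpolynomial (u : ℕ → ℝ) : Prop :=
  ∀ e : ℝ, 0 < e → u =O[atTop] fun N : ℕ => (N : ℝ) ^ e

namespace Subpolynomial

variable {u v : ℕ → ℝ}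

theorem mul (hu : Subpolynomial u) (hv : Subpolynomial v) :
    Subpolynomial fun N => u N * v N := fun e he => by
  refine ((hu (e / 2) (half_pos he)).mul (hv (e / 2) (half_pos he))).congr' .rfl ?_
  filter_upwards [eventually_gt_atTop 0] with N hN
  rw [← Real.rpow_add (Nat.cast_pos.2 hN), add_halves]

theorem const_mul (hu : Subpolynomial u) (c : ℝ) : Subpolynomial fun N => c * u N :=
  fun e he => (hu e he).const_mul_left c

theorem rpow (hu : Subpolynomial u) {a : ℝ} (ha : 0 < a) : Subpolynomial fun N => u N ^ a :=
  fun e he => by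
    refine ((hu (e / a) (div_pos he ha)).rpow ha.le (.of_forall fun N => by positivity)).congr_right
      fun N => ?_
    rw [← Real.rpow_mul N.cast_nonneg, div_mul_cancel₀ e ha.ne']

theorem tendsto_div_natCast (hu : Subpolynomial u) :
    Tendsto (fun N : ℕ => u N / N) atTop (nhds 0) := by
  have hroot : Tendsto (fun N : ℕ => (N : ℝ) ^ (-(1 / 2) : ℝ)) atTop (nhds 0) :=
    (tendsto_rpow_neg_atTop one_half_pos).comp tendsto_natCast_atTop_atTop
  refine (((hu _ one_half_pos).mul (Asymptotics.isBigO_refl (fun N : ℕ => (N : ℝ)⁻¹) _)).congr'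
    .rfl ?_).trans_tendsto hroot
  filter_upwards [eventually_gt_atTop 0] with N hN
  rw [← Real.rpow_neg_one, ← Real.rpow_add (Nat.cast_pos.2 hN)]
  norm_num

end Subpolynomial

theorem subpolynomial_logb : Subpolynomial fun N => Real.logb 2 N := fun _ he =>
  (((isLittleO_log_rpow_atTop he).comp_tendsto tendsto_natCast_atTop_atTop).isBigO.const_mul_left
    (Real.log 2)⁻¹).congr_left fun _ => inv_mul_eq_div _ _

theorem subpolynomial_inv {δ : ℕ → ℝ} (hδpos : ∀ N, 0 < δ N)
    (hδslow : ∀ e : ℝ, 0 < e → Tendsto (fun N : ℕ => δ N * (N : ℝ) ^ e) atTop atTop) :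
    Subpolynomial fun N => (δ N)⁻¹ := fun e he => by
  refine .of_bound 1 ?_
  filter_upwards [(hδslow e he).eventually_ge_atTop 1] with N hN
  rw [one_mul, norm_inv, Real.norm_of_nonneg (hδpos N).le,
    Real.norm_of_nonneg (Real.rpow_nonneg N.cast_nonneg e)]
  exact (inv_le_iff_one_le_mul₀' (hδpos N)).2 hN

end Subpolynomial

section TailScaling

theorem incrementTailBound_le_sq_mul {S T : ℝ → ℝ} {N m : ℕ} {r x w : ℝ} (hw : 0 ≤ w)
    (hw1 : w ≤ 1) (hT : ∀ y, 0 ≤ T y)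
    (h : ∀ l : ℝ, l = 1 ∨ l = 2 ∨ l = 2 * m → T (x / l) ≤ w * S (r / l)) :
    incrementTailBound T N m x ≤ w ^ 2 * incrementTailBound S N m r := by
  have h₁ : T x ≤ w * S r := by simpa only [div_one] using h 1 (.inl rfl)
  have h₂ : T (x / 2) ≤ w * S (r / 2) := h 2 (.inr (.inl rfl))
  have h₃ : T (x / (2 * m)) ≤ w * S (r / (2 * m)) := h _ (.inr (.inr rfl))
  have hS₁ : 0 ≤ w * S r := (hT _).trans h₁
  have hsq : w ^ 2 ≤ w := by
    rw [sq]
    exact mul_le_of_le_one_left hw hw1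
  have hT₃ := hT (x / (2 * m))
  have hT₂ := hT (x / 2)
  calc incrementTailBound T N m x
      ≤ 2 * (w * S r) * (N * 2 ^ m *
          (m * (w * S (r / 2)) + m ^ 2 * (w * S (r / (2 * m))) ^ 2)) := by
        rw [incrementTailBound]
        gcongr
    _ = 2 * (w * S r) * (N * 2 ^ m * (m * (w * S (r / 2)) +
          w ^ 2 * (m ^ 2 * S (r / (2 * m)) ^ 2))) := by ring
    _ ≤ 2 * (w * S r) * (N * 2 ^ m * (m * (w * S (r / 2)) +
          w * (m ^ 2 * S (r / (2 * m)) ^ 2))) := by gcongr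
    _ = w ^ 2 * incrementTailBound S N m r := by
        rw [incrementTailBound]
        ring

theorem incrementTailBound_powerTail_le {a L δ r : ℝ} {N m : ℕ} (ha : 0 ≤ a) (hN : 0 < N)
    (hL : 0 < L) (hδ : 0 ≤ δ) (hr : 0 < r) (hm : m ≤ L) (h2m : 2 ^ m = N * δ) :
    incrementTailBound (fun y => (2 / y) ^ a * (2 * N * L)⁻¹) N m r ≤
      δ / L * (8 ^ a * r ^ (-(2 * a)) + (2 / r) ^ a * (4 * L / r) ^ (2 * a) / N) := by
  have : (0 : ℝ) < N := Nat.cast_pos.2 hN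
  have hrm : 2 / (r / (2 * m)) ≤ 4 * L / r := by
    rw [div_div_eq_mul_div, ← mul_assoc]
    norm_num1
    gcongr
  have hpow₂ : (2 / r) ^ a * (2 / (r / 2)) ^ a = 8 ^ a * r ^ (-(2 * a)) := by
    have hbase : 2 / r * (2 / (r / 2)) = 8 * (r⁻¹) ^ 2 := by
      field_simp
      norm_num
    rw [← Real.mul_rpow (by positivity) (by positivity), hbase,
      Real.mul_rpow (by positivity) (by positivity), Real.rpow_neg hr.le, Real.rpow_mul hr.le,
      Real.rpow_two, ← Real.inv_rpow (by positivity), inv_pow]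
  calc incrementTailBound (fun y => (2 / y) ^ a * (2 * N * L)⁻¹) N m r
      ≤ 2 * ((2 / r) ^ a * (2 * N * L)⁻¹) * (N * (N * δ) *
          (L * ((2 / (r / 2)) ^ a * (2 * N * L)⁻¹) +
            L ^ 2 * ((4 * L / r) ^ a * (2 * N * L)⁻¹) ^ 2)) := by
        rw [incrementTailBound, h2m]
        gcongr
    _ = δ / L * ((2 / r) ^ a * (2 / (r / 2)) ^ a / 2 +
          (2 / r) ^ a * ((4 * L / r) ^ a) ^ 2 / N / 4) := by
        field_simp
        ring
    _ ≤ δ / L * ((2 / r) ^ a * (2 / (r / 2)) ^ a + (2 / r) ^ a * ((4 * L / r) ^ a) ^ 2 / N) := by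
        have h₁ : 0 ≤ (2 / r) ^ a * (2 / (r / 2)) ^ a := by positivity
        have h₂ : 0 ≤ (2 / r) ^ a * ((4 * L / r) ^ a) ^ 2 / N := by positivity
        refine mul_le_mul_of_nonneg_left ?_ (by positivity)
        linarith
    _ = _ := by
        rw [hpow₂, mul_comm 2 a, Real.rpow_mul (by positivity), Real.rpow_two]

end TailScaling

section IncrementScale

/-- The scale `(δ_N / log₂ N) ^ (1 / s)` of the increments of `θ`. To leading order an increment
exceeds `x` with probability at most `x ^ (-2α) * δ_N / log₂ N`, so `s = 2α` is the critical choice;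
taking `s > 2α` leaves room for subpolynomial factors. -/
def incrementScale (δ : ℕ → ℝ) (s : ℝ) (N : ℕ) : ℝ := (δ N / Real.logb 2 N) ^ s⁻¹

theorem tendsto_logb_two_natCast : Tendsto (fun N : ℕ => Real.logb 2 N) atTop atTop :=
  (Real.tendsto_logb_atTop one_lt_two).comp tendsto_natCast_atTop_atTop

theorem two_pow_eq_mul_of_eq_logb_add {N m : ℕ} {d : ℝ} (hN : 0 < N) (hd : 0 < d)
    (hm : (m : ℝ) = Real.logb 2 N + Real.logb 2 d) : (2 : ℝ) ^ m = N * d := by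
  have hN0 : (0 : ℝ) < N := Nat.cast_pos.2 hN
  rw [← Real.rpow_natCast, hm, Real.rpow_add two_pos, Real.rpow_logb two_pos (by norm_num) hN0,
    Real.rpow_logb two_pos (by norm_num) hd]

variable {δ : ℕ → ℝ} {m : ℕ → ℕ} {s a : ℝ}

theorem eventually_natCast_le_logb (hδpos : ∀ N, 0 < δ N) (hδ1 : ∀ᶠ N in atTop, δ N ≤ 1)
    (hm : ∀ N : ℕ, (m N : ℝ) = Real.logb 2 N + Real.logb 2 (δ N)) :
    ∀ᶠ N : ℕ in atTop, (m N : ℝ) ≤ Real.logb 2 N := by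
  filter_upwards [hδ1] with N hN
  linarith [hm N, Real.logb_nonpos one_lt_two (hδpos N).le hN]

theorem eventually_one_le_of_eq_logb_add (hδpos : ∀ N, 0 < δ N)
    (hδslow : Tendsto (fun N : ℕ => δ N * (N : ℝ) ^ (1 : ℝ)) atTop atTop)
    (hm : ∀ N : ℕ, (m N : ℝ) = Real.logb 2 N + Real.logb 2 (δ N)) :
    ∀ᶠ N : ℕ in atTop, 1 ≤ m N := by
  filter_upwards [hδslow.eventually_gt_atTop 1, eventually_gt_atTop 0] with N hN hN0
  by_contra! hlt
  have hpow := two_pow_eq_mul_of_eq_logb_add hN0 (hδpos N) (hm N)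
  rw [Nat.lt_one_iff.1 hlt, pow_zero] at hpow
  rw [Real.rpow_one, mul_comm, ← hpow] at hN
  exact lt_irrefl _ hN

theorem incrementScale_pos (hδpos : ∀ N, 0 < δ N) (s : ℝ) {N : ℕ} (hN : 1 < N) :
    0 < incrementScale δ s N :=
  Real.rpow_pos_of_pos (div_pos (hδpos N)
    (Real.logb_pos one_lt_two (Nat.one_lt_cast.2 hN))) _

theorem incrementScale_rpow (hδpos : ∀ N, 0 < δ N) (s p : ℝ) {N : ℕ} (hN : 1 < N) :
    incrementScale δ s N ^ p = (δ N / Real.logb 2 N) ^ (p / s) := by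
  rw [incrementScale, ← Real.rpow_mul (div_pos (hδpos N)
    (Real.logb_pos one_lt_two (Nat.one_lt_cast.2 hN))).le, inv_mul_eq_div]

theorem tendsto_incrementScale (hδpos : ∀ N, 0 < δ N) (hδ1 : ∀ᶠ N in atTop, δ N ≤ 1)
    (hs : 0 < s) : Tendsto (incrementScale δ s) atTop (nhds 0) := by
  have hratio : Tendsto (fun N => δ N / Real.logb 2 N) atTop (nhds 0) := by
    refine squeeze_zero' ?_ ?_ tendsto_logb_two_natCast.inv_tendsto_atTop
    · filter_upwards [tendsto_logb_two_natCast.eventually_ge_atTop 0] with N hL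
      exact div_nonneg (hδpos N).le hL
    · filter_upwards [hδ1, tendsto_logb_two_natCast.eventually_ge_atTop 0] with N hN hL
      rw [div_eq_mul_inv]
      exact mul_le_of_le_one_left (inv_nonneg.2 hL) hN
  have hpow := hratio.rpow_const (p := s⁻¹) (.inr (inv_pos.2 hs).le)
  rwa [Real.zero_rpow (inv_pos.2 hs).ne'] at hpow

theorem subpolynomial_inv_incrementScale (hδpos : ∀ N, 0 < δ N)
    (hδslow : ∀ e : ℝ, 0 < e → Tendsto (fun N : ℕ => δ N * (N : ℝ) ^ e) atTop atTop)
    (hs : 0 < s) : Subpolynomial fun N => (incrementScale δ s N)⁻¹ := by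
  refine fun e he => (((subpolynomial_logb.mul (subpolynomial_inv hδpos hδslow)).rpow
    (inv_pos.2 hs)) e he).congr_left fun N => ?_
  rw [incrementScale, ← Real.inv_rpow (div_nonneg (hδpos N).le ?_), inv_div, div_eq_mul_inv]
  obtain rfl | hN := N.eq_zero_or_pos
  · simp only [Nat.cast_zero, Real.logb_zero, le_refl]
  · exact Real.logb_nonneg one_lt_two (Nat.one_le_cast.2 hN)

theorem eventually_incrementTailBound_powerTail_le_one (hδpos : ∀ N, 0 < δ N)
    (hδ1 : ∀ᶠ N in atTop, δ N ≤ 1)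
    (hδslow : ∀ e : ℝ, 0 < e → Tendsto (fun N : ℕ => δ N * (N : ℝ) ^ e) atTop atTop)
    (hm : ∀ N : ℕ, (m N : ℝ) = Real.logb 2 N + Real.logb 2 (δ N)) (ha : 0 < a) (has : 2 * a < s) :
    ∀ᶠ N : ℕ in atTop, incrementTailBound (fun y => (2 / y) ^ a * (2 * N * Real.logb 2 N)⁻¹)
      N (m N) (incrementScale δ s N) ≤ 1 := by
  have hs : 0 < s := by linarith
  have hinv := subpolynomial_inv_incrementScale hδpos hδslow hs
  have hfirst : Tendsto (fun N => 8 ^ a * incrementScale δ s N ^ (s - 2 * a)) atTop (nhds 0) := by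
    simpa only [Real.zero_rpow (sub_pos.2 has).ne', mul_zero] using
      ((tendsto_incrementScale hδpos hδ1 hs).rpow_const
        (.inr (sub_pos.2 has).le)).const_mul ((8 : ℝ) ^ a)
  have hsecond := (((hinv.const_mul 2).rpow ha).mul
    (((subpolynomial_logb.const_mul 4).mul hinv).rpow (mul_pos two_pos ha))).tendsto_div_natCast
  filter_upwards [hfirst.eventually_le_const one_half_pos,
    hsecond.eventually_le_const one_half_pos, eventually_natCast_le_logb hδpos hδ1 hm, hδ1,
    tendsto_logb_two_natCast.eventually_ge_atTop 1, eventually_gt_atTop 1]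
    with N hN₁ hN₂ hmN hδN hL hN
  set L := Real.logb 2 N
  set r := incrementScale δ s N with hr_def
  have hr : 0 < r := incrementScale_pos hδpos s hN
  have hrs : r ^ s = δ N / L := by
    rw [hr_def, incrementScale_rpow hδpos s s hN, div_self hs.ne', Real.rpow_one]
  have hrs1 : r ^ s ≤ 1 := hrs ▸ (div_le_one₀ (by linarith)).2 (hδN.trans hL)
  simp only [← div_eq_mul_inv] at hN₂
  calc _ ≤ δ N / L * (8 ^ a * r ^ (-(2 * a)) + (2 / r) ^ a * (4 * L / r) ^ (2 * a) / N) :=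
        incrementTailBound_powerTail_le ha.le (by lia) (by linarith) (hδpos N).le hr hmN
          (two_pow_eq_mul_of_eq_logb_add (by lia) (hδpos N) (hm N))
    _ = 8 ^ a * r ^ (s - 2 * a) + r ^ s * ((2 / r) ^ a * (4 * L / r) ^ (2 * a) / N) := by
        rw [← hrs, mul_add, sub_eq_add_neg, Real.rpow_add hr, mul_left_comm]
    _ ≤ 1 / 2 + 1 / 2 := add_le_add hN₁ ((mul_le_of_le_one_left (by positivity) hrs1).trans hN₂)
    _ = 1 := add_halves 1

theorem eventually_rpow_mul_inv_lt (hδpos : ∀ N, 0 < δ N)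
    (hδslow : ∀ e : ℝ, 0 < e → Tendsto (fun N : ℕ => δ N * (N : ℝ) ^ e) atTop atTop)
    (hs : 0 < s) (ha : 0 < a) {c : ℝ} (hc : 0 < c) :
    ∀ᶠ N : ℕ in atTop, (2 * (2 * Real.logb 2 N / incrementScale δ s N)) ^ a *
      (2 * N * Real.logb 2 N)⁻¹ < c := by
  have hlim := (((subpolynomial_logb.const_mul 2).mul
    (subpolynomial_inv_incrementScale hδpos hδslow hs)).const_mul 2 |>.rpow ha).tendsto_div_natCast
  filter_upwards [hlim.eventually_lt_const hc, tendsto_logb_two_natCast.eventually_ge_atTop 1,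
    eventually_gt_atTop 1] with N hlt hL hN
  have hr := incrementScale_pos hδpos s hN
  have hN0 : (0 : ℝ) < N := by positivity
  refine lt_of_le_of_lt ?_ hlt
  rw [← div_eq_mul_inv, ← div_eq_mul_inv]
  gcongr
  nlinarith

theorem DyadicDecay.incrementTailBound_le {f : ℝ → ℝ} {x₀ b a c φ r x : ℝ} {N m : ℕ}
    (hf : DyadicDecay f x₀ b a) (hb : 0 ≤ b) (hba : b ≤ a) (hr : 0 < r) (hr1 : r ≤ 1) (hm : 1 ≤ m)
    (hc : 2 * m / r * x₀ ≤ c) (hφ : f c ≤ φ)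
    (hpower : incrementTailBound (fun y => (2 / y) ^ a * φ) N m r ≤ 1) (hx : r ≤ x) :
    incrementTailBound (fun y => f (c * y)) N m x ≤ (r / x) ^ (2 * b) := by
  have hx0 : 0 < x := hr.trans_le hx
  have hx₀ := hf.x₀_pos
  have hm1 : (1 : ℝ) ≤ m := Nat.one_le_cast.2 hm
  have hratio : r / x ≤ 1 := div_le_one_of_le₀ hx hx0.le
  have hscaled (l : ℝ) (hl : l = 1 ∨ l = 2 ∨ l = 2 * m) :
      f (c * (x / l)) ≤ (r / x) ^ b * ((2 / (r / l)) ^ a * φ) := by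
    have hl1 : 1 ≤ l := by rcases hl with rfl | rfl | rfl <;> linarith
    have hlm : l ≤ 2 * m := by rcases hl with rfl | rfl | rfl <;> linarith
    refine (hf.scaled_le hb hba hr hr1 hl1 (hc.trans' (by gcongr)) hx).trans ?_
    gcongr
  calc incrementTailBound (fun y => f (c * y)) N m x
      ≤ ((r / x) ^ b) ^ 2 * incrementTailBound (fun y => (2 / y) ^ a * φ) N m r :=
        incrementTailBound_le_sq_mul (by positivity) (Real.rpow_le_one (by positivity) hratio hb)
          (fun y => (hf.pos _).le) hscaled
    _ ≤ ((r / x) ^ b) ^ 2 := mul_le_of_le_one_right (by positivity) hpower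
    _ = (r / x) ^ (2 * b) := by
        rw [mul_comm 2 b, Real.rpow_mul (by positivity), Real.rpow_two]

theorem eventually_incrementTailBound_tail_le {Ω : Type*} [MeasurableSpace Ω] (P : Measure Ω)
    [IsProbabilityMeasure P] {X : Ω → ℝ} (hX : Measurable X) {α q s : ℝ}
    (hlim : Tendsto (fun x => tail P X x / tail P X (2 * x)) atTop (nhds (2 ^ α)))
    {δ : ℕ → ℝ} (hδpos : ∀ N, 0 < δ N) (hδ1 : ∀ᶠ N in atTop, δ N ≤ 1)
    (hδslow : ∀ e : ℝ, 0 < e → Tendsto (fun N : ℕ => δ N * (N : ℝ) ^ e) atTop atTop)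
    {m : ℕ → ℕ} (hm : ∀ N : ℕ, (m N : ℝ) = Real.logb 2 N + Real.logb 2 (δ N))
    (hq : 0 ≤ q) (hqα : q < 2 * α) (hαs : 2 * α < s) :
    ∀ᶠ N : ℕ in atTop, 0 < cN P X N ∧ ∀ x, incrementScale δ s N ≤ x →
      incrementTailBound (fun y => tail P X (cN P X N * y)) N (m N) x ≤
        (incrementScale δ s N / x) ^ q := by
  obtain ⟨a, hαa, has⟩ : ∃ a, α < a ∧ a < s / 2 := exists_between (by linarith)
  obtain ⟨x₀, hdec⟩ := exists_dyadicDecay (tail_antitone P X) (fun _ => ENNReal.toReal_nonneg) hlim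
    (b := q / 2) (by linarith) hαa
  have ha : 0 < a := by linarith
  have hs : 0 < s := by linarith
  filter_upwards [eventually_incrementTailBound_powerTail_le_one hδpos hδ1 hδslow hm ha
      (show 2 * a < s by linarith),
    eventually_rpow_mul_inv_lt hδpos hδslow hs ha (hdec.pos x₀),
    (tendsto_incrementScale hδpos hδ1 hs).eventually_le_const one_pos,
    eventually_natCast_le_logb hδpos hδ1 hm, eventually_one_le_of_eq_logb_add hδpos
      (hδslow 1 one_pos) hm, tendsto_logb_two_natCast.eventually_gt_atTop 0,
    eventually_gt_atTop 1] with N hpower hlt hr1 hmL hm1 hL hN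
  have hr := incrementScale_pos hδpos s hN
  have hcN : tail P X (cN P X N) ≤ (2 * N * Real.logb 2 N)⁻¹ :=
    tail_hinv_le_inv P hX (by positivity)
  have hm1' : (1 : ℝ) ≤ m N := Nat.one_le_cast.2 hm1
  have hc : 2 * m N / incrementScale δ s N * x₀ ≤ cN P X N := by
    refine hdec.mul_le_of_rpow_mul_lt ha.le ((one_le_div hr).2 (by linarith)) (hlt.trans_le' ?_)
    have := (hdec.pos (cN P X N)).le
    gcongr
  refine ⟨hc.trans_lt' (mul_pos (by positivity) hdec.x₀_pos), fun x hx => ?_⟩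
  have hbound := hdec.incrementTailBound_le (by linarith) (by linarith) hr hr1 hm1 hc hcN hpower hx
  rwa [mul_div_cancel₀ q two_ne_zero] at hbound

end IncrementScale

theorem stmt_2_general {Ω : Type*} [MeasurableSpace Ω] (P : Measure Ω) [IsProbabilityMeasure P]
    (X : Ω → ℝ) (hX : Measurable X) (α : ℝ)
    (hlim : Tendsto (fun x => tail P X x / tail P X (2 * x)) atTop (nhds (2 ^ α)))
    (ξ : (N : ℕ) → ℕ → Fin N → Fin 2 → Ω → ℝ)
    (hξmeas : ∀ N n i j, Measurable (ξ N n i j))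
    (hξpos : ∀ N n i j ω, 0 ≤ ξ N n i j ω)
    (hξdist : ∀ N n i j, Measure.map (ξ N n i j) P = Measure.map X P)
    (hξindep : ∀ N, iIndepFun
      (fun p : ℕ × Fin N × Fin 2 => ξ N p.1 p.2.1 p.2.2) P)
    (δ : ℕ → ℝ) (hδpos : ∀ N, 0 < δ N) (hδ1 : ∀ᶠ N in atTop, δ N ≤ 1)
    (hδslow : ∀ e : ℝ, 0 < e → Tendsto (fun N : ℕ => δ N * (N : ℝ) ^ e) atTop atTop)
    (mN : ℕ → ℕ) (hmN : ∀ N : ℕ, (mN N : ℝ) = Real.logb 2 N + Real.logb 2 (δ N))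
    (p : ℝ) (hp0 : 0 ≤ p) (hp : p < 2 * α) (ε : ℝ) (hε0 : 0 < ε) :
    ∃ Nε : ℕ, ∀ N : ℕ, Nε < N → ∀ n : ℕ,
      ∀ᵐ ω ∂P,
        (P[fun ω' => (theta N (mN N) (fun k i j => ξ N k i j ω' / cN P X N) (n + 1) -
              theta N (mN N) (fun k i j => ξ N k i j ω' / cN P X N) n) ^ p |
            brwFilt N (ξ N) (n - mN N)]) ω ≤
          (1 + 4 * p / (2 * α - p)) * (δ N / Real.logb 2 N) ^ (p / (2 * α + ε)) := by
  set q := p + (2 * α - p) / 4 with hq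
  have : 0 < 2 * α - p := sub_pos.2 hp
  obtain ⟨Nε, hNε⟩ := eventually_atTop.1 <|
    (eventually_incrementTailBound_tail_le P hX hlim hδpos hδ1 hδslow hmN (q := q) (by linarith)
      (by linarith) (lt_add_of_pos_right _ hε0)).and (eventually_gt_atTop 1)
  refine ⟨Nε, fun N hN n => ?_⟩
  obtain ⟨⟨hc, htail⟩, hN1⟩ := hNε N hN.le
  have : NeZero N := ⟨by lia⟩
  have hν := Measure.isProbabilityMeasure_map (μ := P) hX.aemeasurable
  have hν' := Measure.isProbabilityMeasure_map (μ := P.map X) (f := (· / cN P X N)) (by fun_prop)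
  have hξ : IIDJumps P (ξ N) (P.map X) := ⟨hξmeas N, hξindep N, hξdist N⟩
  have hbound := (hξ.div_const (cN P X N)).condExp_theta_increment_rpow_le
    (fun k i j ω => div_nonneg (hξpos N k i j ω) hc.le) (incrementScale_pos hδpos _ hN1) hp0
    (show p < q by linarith) (by simpa only [map_div_const_real_Ioi P hX hc] using htail) n
  have hconst : p / (q - p) = 4 * p / (2 * α - p) := by
    rw [hq, add_sub_cancel_left, div_div_eq_mul_div, mul_comm]
  rwa [brwFilt_div_const _ hc.ne', incrementScale_rpow hδpos _ _ hN1, hconst] at hbound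

/-- Corollary "upper": let `p ∈ [0, 2α)`. For every `0 < ε ≤ (2α−p)/2` there
exists `N_ε` such that for all `N > N_ε` and all `n ≥ 0`, almost surely
`E[(θ_{n+1} − θ_n)^p | F_{n−m_N}] ≤ (1 + 4p/(2α−p)) (δ_N/log₂ N)^{p/(2α+ε)}`,
where `θ = θ^{(m_N)}` with `m_N = log₂ N + log₂ δ_N`. -/
theorem stmt_2 {Ω : Type*} [MeasurableSpace Ω] (P : Measure Ω) [IsProbabilityMeasure P]
    (X : Ω → ℝ) (hXmeas : Measurable X) (hXpos : ∀ ω, 0 ≤ X ω)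
    (α : ℝ) (hα : 0 < α)
    (hRV : ∀ l : ℝ, 0 < l →
      Tendsto (fun x => tail P X x / tail P X (l * x)) atTop (nhds (l ^ α)))
    (ξ : (N : ℕ) → ℕ → Fin N → Fin 2 → Ω → ℝ)
    (hξmeas : ∀ N n i j, Measurable (ξ N n i j))
    (hξpos : ∀ N n i j ω, 0 ≤ ξ N n i j ω)
    (hξdist : ∀ N n i j, Measure.map (ξ N n i j) P = Measure.map X P)
    (hξindep : ∀ N, iIndepFun
      (fun p : ℕ × Fin N × Fin 2 => ξ N p.1 p.2.1 p.2.2) P)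
    (δ : ℕ → ℝ) (hδpos : ∀ N, 0 < δ N) (hδ0 : Tendsto δ atTop (nhds 0))
    (hδslow : ∀ e : ℝ, 0 < e → Tendsto (fun N : ℕ => δ N * (N : ℝ) ^ e) atTop atTop)
    (mN : ℕ → ℕ) (hmN1 : ∀ N, 1 ≤ mN N)
    (hmN : ∀ N : ℕ, (mN N : ℝ) = Real.logb 2 N + Real.logb 2 (δ N))
    (p : ℝ) (hp0 : 0 ≤ p) (hp : p < 2 * α)
    (ε : ℝ) (hε0 : 0 < ε) (hε : ε ≤ (2 * α - p) / 2) :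
    ∃ Nε : ℕ, ∀ N : ℕ, Nε < N → ∀ n : ℕ,
      ∀ᵐ ω ∂P,
        (P[fun ω' => (theta N (mN N) (fun k i j => ξ N k i j ω' / cN P X N) (n + 1) -
              theta N (mN N) (fun k i j => ξ N k i j ω' / cN P X N) n) ^ p |
            brwFilt N (ξ N) (n - mN N)]) ω ≤
          (1 + 4 * p / (2 * α - p)) * (δ N / Real.logb 2 N) ^ (p / (2 * α + ε)) :=
  stmt_2_general P X hXmeas α (hRV 2 two_pos) ξ hξmeas hξpos hξdist hξindep δ hδpos
    (hδ0.eventually_le_const one_pos) hδslow mN hmN p hp0 hp ε hε0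

end
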